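/- arXiv:2510.03429 — 3 statements merged into one kernel-verified Lean document; each statement's English description precedes it below -/
import Mathlib

section
/- Let k be a nontrivial commutative ring and n ≥ 2. Let L be the Leavitt algebra of module type (1, n) over k: the quotient of the free k-algebra on 2n generators x_1, …, x_n, y_1, …, y_n by the two-sided ideal generated by the Cuntz–Krieger relations y_i x_j − δ_{ij} (for all 1 ≤ i, j ≤ n) and (Σ_{i=1}^n x_i y_i) − 1. Then: (i) there is a left L-module isomorphism L ≃ₗ[L] (Fin n → L); and (ii) for every natural number l ≥ 1, if L ≃ₗ[L] (Fin l → L) as left L-modules, then n − 1 divides l − 1. In other words, the module type of L is (1, n). -/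
/-- The Cuntz–Krieger relations defining the Leavitt algebra of type `(1, n)`:
`y i * x j = δ_{ij}` and `∑ i, x i * y i = 1`, where `x i` are the images of the left
summand generators and `y i` those of the right summand generators. -/
inductive LeavittRel (k : Type*) [CommRing k] (n : ℕ) :
    FreeAlgebra k (Fin n ⊕ Fin n) → FreeAlgebra k (Fin n ⊕ Fin n) → Prop
  | ck1 (i j : Fin n) : LeavittRel k n
      (FreeAlgebra.ι k (Sum.inr i) * FreeAlgebra.ι k (Sum.inl j))
      (if i = j then 1 else 0)
  | ck2 : LeavittRel k n
      (∑ i : Fin n, FreeAlgebra.ι k (Sum.inl i) * FreeAlgebra.ι k (Sum.inr i)) 1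

section Fred
variable {F : Type*} [Field F]

/-- Algebraic Fredholm map of index `i`. -/
def LvFred {V W : Type*} [AddCommGroup V] [Module F V] [AddCommGroup W] [Module F W]
    (f : V →ₗ[F] W) (i : ℤ) : Prop :=
  Module.Finite F (LinearMap.ker f) ∧ Module.Finite F (W ⧸ LinearMap.range f) ∧
    (Module.finrank F (LinearMap.ker f) : ℤ) - Module.finrank F (W ⧸ LinearMap.range f) = i

variable {V W X : Type*} [AddCommGroup V] [Module F V] [AddCommGroup W] [Module F W]
  [AddCommGroup X] [Module F X]

theorem LvFred.unique {f : V →ₗ[F] W} {i j : ℤ} (h : LvFred f i) (h' : LvFred f j) : i = j := by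
  rw [← h.2.2, ← h'.2.2]

theorem lv_finite_of_map (h : V →ₗ[F] W) [Module.Finite F (LinearMap.ker h)]
    [Module.Finite F (LinearMap.range h)] : Module.Finite F V := by
  have : Module.Finite F (V ⧸ LinearMap.ker h) :=
    Module.Finite.equiv h.quotKerEquivRange.symm
  exact Module.Finite.of_submodule_quotient (LinearMap.ker h)

theorem LvFred.comp {f : V →ₗ[F] W} {g : W →ₗ[F] X} {i j : ℤ} (hf : LvFred f i)
    (hg : LvFred g j) : LvFred (g ∘ₗ f) (i + j) := by
  obtain ⟨f1, f2, f3⟩ := hf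
  obtain ⟨g1, g2, g3⟩ := hg
  -- the maps of the six-term exact sequence
  let h : LinearMap.ker (g ∘ₗ f) →ₗ[F] LinearMap.ker g :=
    f.restrict (fun x hx => by simpa using hx)
  let t : LinearMap.ker g →ₗ[F] (W ⧸ LinearMap.range f) :=
    (LinearMap.range f).mkQ ∘ₗ (LinearMap.ker g).subtype
  let q : (W ⧸ LinearMap.range f) →ₗ[F] (X ⧸ LinearMap.range (g ∘ₗ f)) :=
    Submodule.mapQ _ _ g (by rintro _ ⟨v, rfl⟩; exact ⟨v, rfl⟩)
  let p : (X ⧸ LinearMap.range (g ∘ₗ f)) →ₗ[F] (X ⧸ LinearMap.range g) :=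
    Submodule.mapQ _ _ LinearMap.id (by rintro _ ⟨v, rfl⟩; exact ⟨f v, rfl⟩)
  have hle : LinearMap.ker f ≤ LinearMap.ker (g ∘ₗ f) := LinearMap.ker_le_ker_comp f g
  have e1 : LinearMap.ker h = (LinearMap.ker f).submoduleOf (LinearMap.ker (g ∘ₗ f)) := by
    ext x
    simp [h, Submodule.submoduleOf, LinearMap.restrict_apply, Subtype.ext_iff]
  let E1 : LinearMap.ker h ≃ₗ[F] LinearMap.ker f :=
    (LinearEquiv.ofEq _ _ e1).trans (Submodule.submoduleOfEquivOfLe hle)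
  have e2 : LinearMap.ker t = LinearMap.range h := by
    ext ⟨x, hx⟩
    simp only [t, h, LinearMap.mem_ker, LinearMap.comp_apply, Submodule.subtype_apply,
      Submodule.mkQ_apply, Submodule.Quotient.mk_eq_zero, LinearMap.mem_range]
    constructor
    · rintro ⟨v, rfl⟩
      exact ⟨⟨v, by simpa using hx⟩, rfl⟩
    · rintro ⟨v, hv⟩
      exact ⟨v.1, congrArg Subtype.val hv⟩
  have e3 : LinearMap.ker q = LinearMap.range t := by
    ext x
    obtain ⟨w, rfl⟩ := Submodule.Quotient.mk_surjective _ x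
    simp only [q, t, LinearMap.mem_ker, Submodule.mapQ_apply, Submodule.Quotient.mk_eq_zero,
      LinearMap.mem_range, LinearMap.comp_apply, Submodule.subtype_apply, Submodule.mkQ_apply]
    constructor
    · rintro ⟨v, hv⟩
      refine ⟨⟨w - f v, by simp [hv]⟩, ?_⟩
      rw [Submodule.Quotient.eq]
      exact ⟨-v, by simp⟩
    · rintro ⟨y, hy⟩
      rw [Submodule.Quotient.eq] at hy
      obtain ⟨v, hv⟩ := hy
      refine ⟨-v, ?_⟩
      have := y.2
      rw [LinearMap.mem_ker] at this
      simp [hv, this]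
  have e4 : LinearMap.ker p = LinearMap.range q := by
    ext x
    obtain ⟨w, rfl⟩ := Submodule.Quotient.mk_surjective _ x
    simp only [q, p, LinearMap.mem_ker, Submodule.mapQ_apply, Submodule.Quotient.mk_eq_zero,
      LinearMap.mem_range, LinearMap.id_apply]
    constructor
    · rintro ⟨v, rfl⟩
      exact ⟨Submodule.Quotient.mk v, rfl⟩
    · rintro ⟨y, hy⟩
      obtain ⟨y, rfl⟩ := Submodule.Quotient.mk_surjective _ y
      rw [Submodule.mapQ_apply, Submodule.Quotient.eq] at hy
      obtain ⟨v, hv⟩ := hy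
      refine ⟨y - f v, ?_⟩
      simp only [LinearMap.comp_apply] at hv
      simp [hv]
  have e5 : LinearMap.range p = ⊤ := by
    rw [LinearMap.range_eq_top]
    intro x
    obtain ⟨w, rfl⟩ := Submodule.Quotient.mk_surjective _ x
    exact ⟨Submodule.Quotient.mk w, rfl⟩
  have i1 : Module.Finite F (LinearMap.ker h) := Module.Finite.equiv E1.symm
  have i2 : Module.Finite F (LinearMap.ker (g ∘ₗ f)) := lv_finite_of_map h
  have i3 : Module.Finite F (LinearMap.ker p) := by rw [e4]; infer_instance
  have i4 : Module.Finite F (X ⧸ LinearMap.range (g ∘ₗ f)) := lv_finite_of_map p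
  have r1 := h.finrank_range_add_finrank_ker
  have r2 := t.finrank_range_add_finrank_ker
  have r3 := q.finrank_range_add_finrank_ker
  have r4 := p.finrank_range_add_finrank_ker
  rw [E1.finrank_eq] at r1
  rw [e2] at r2
  rw [e3] at r3
  rw [e4, e5, finrank_top] at r4
  refine ⟨i2, i4, ?_⟩
  omega

theorem LvFred.congr {f g : V →ₗ[F] W} {i j : ℤ} (hf : LvFred f i) (hg : LvFred g j)
    (h : (f - g).HasFiniteRange) : i = j := by
  have hU : LvFred (LinearMap.ker (f - g)).subtype
      (-(Module.finrank F (V ⧸ LinearMap.ker (f - g)) : ℤ)) := by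
    have : Module.Finite F (LinearMap.range (f - g)) := Module.Finite.of_fg h
    have : Module.Finite F (V ⧸ LinearMap.ker (f - g)) :=
      Module.Finite.equiv (f - g).quotKerEquivRange.symm
    refine ⟨?_, ?_, ?_⟩
    · rw [Submodule.ker_subtype]; infer_instance
    · rw [Submodule.range_subtype]; infer_instance
    · rw [Submodule.ker_subtype, Submodule.range_subtype]; simp
  have h1 := hU.comp hf
  have h2 := hU.comp hg
  have : f ∘ₗ (LinearMap.ker (f - g)).subtype = g ∘ₗ (LinearMap.ker (f - g)).subtype := by
    ext x
    have := x.2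
    rw [LinearMap.mem_ker, LinearMap.sub_apply, sub_eq_zero] at this
    exact this
  rw [this] at h1
  have := h1.unique h2
  omega

theorem LvFred.of_equiv (e : V ≃ₗ[F] W) : LvFred (e : V →ₗ[F] W) 0 := by
  refine ⟨?_, ?_, ?_⟩
  · rw [LinearEquiv.ker]; infer_instance
  · rw [LinearEquiv.range]; infer_instance
  · rw [LinearEquiv.range, LinearEquiv.ker]
    have : Module.finrank F (W ⧸ (⊤ : Submodule F W)) = 0 :=
      Module.finrank_zero_of_subsingleton
    simp [this]

theorem LvFred.exists_of_quasi (a : V →ₗ[F] W) (b : W →ₗ[F] V)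
    (h1 : (b ∘ₗ a - LinearMap.id).HasFiniteRange)
    (h2 : (a ∘ₗ b - LinearMap.id).HasFiniteRange) : ∃ i, LvFred a i := by
  refine ⟨_, ?_, ?_, rfl⟩
  · have : Module.Finite F (LinearMap.range (b ∘ₗ a - LinearMap.id)) := Module.Finite.of_fg h1
    refine Submodule.finiteDimensional_of_le (S₂ := LinearMap.range (b ∘ₗ a - LinearMap.id)) ?_
    intro x hx
    rw [LinearMap.mem_ker] at hx
    exact ⟨-x, by simp [hx]⟩
  · have h3 : (LinearMap.ker (a ∘ₗ b - LinearMap.id)).CoFG :=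
      LinearMap.ker_coFG_iff_hasFiniteRange.mpr h2
    refine h3.of_le ?_
    intro x hx
    rw [LinearMap.mem_ker, LinearMap.sub_apply, sub_eq_zero] at hx
    exact ⟨b x, hx⟩

theorem LvFred.pi {f : V →ₗ[F] W} {i : ℤ} (hf : LvFred f i) (n : ℕ) :
    LvFred (f.compLeft (Fin n)) (n * i) := by
  obtain ⟨f1, f2, f3⟩ := hf
  let E : LinearMap.ker (f.compLeft (Fin n)) ≃ₗ[F] (Fin n → LinearMap.ker f) :=
    { toFun := fun v j => ⟨v.1 j, by
        have := v.2
        rw [LinearMap.mem_ker] at this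
        exact congrFun this j⟩
      invFun := fun v => ⟨fun j => (v j).1, by
        rw [LinearMap.mem_ker]; ext j; exact (v j).2⟩
      map_add' := fun _ _ => rfl
      map_smul' := fun _ _ => rfl
      left_inv := fun _ => rfl
      right_inv := fun _ => rfl }
  have hr : LinearMap.range (f.compLeft (Fin n))
      = Submodule.pi Set.univ (fun _ => LinearMap.range f) := LinearMap.range_compLeft f _
  let E2 : ((Fin n → W) ⧸ LinearMap.range (f.compLeft (Fin n))) ≃ₗ[F]
      (Fin n → W ⧸ LinearMap.range f) :=
    (Submodule.quotEquivOfEq _ _ hr).trans (Submodule.quotientPi _)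
  refine ⟨Module.Finite.equiv E.symm, Module.Finite.equiv E2.symm, ?_⟩
  rw [E.finrank_eq, E2.finrank_eq, Module.finrank_pi_fintype, Module.finrank_pi_fintype]
  simp [← f3]
  ring

end Fred

section Toeplitz
variable (F : Type*) [Field F] (n : ℕ)

/-- Space with basis the words in `n` letters. -/
abbrev LvV := List (Fin n) →₀ F

/-- Prepend a letter. -/
noncomputable def lvX (j : Fin n) : Module.End F (LvV F n) :=
  Finsupp.lmapDomain F F (List.cons j)

/-- Auxiliary: remove the first letter `i` from a basis word. -/
noncomputable def lvYaux (i : Fin n) : List (Fin n) → LvV F n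
  | [] => 0
  | j :: u => if i = j then Finsupp.single u 1 else 0

/-- Remove the first letter `i`. -/
noncomputable def lvY (i : Fin n) : Module.End F (LvV F n) :=
  Finsupp.linearCombination F (lvYaux F n i)

/-- Reverse words. -/
noncomputable def lvR : Module.End F (LvV F n) :=
  Finsupp.lmapDomain F F List.reverse

variable {F n}

theorem lvX_single (j : Fin n) (w : List (Fin n)) (c : F) :
    lvX F n j (Finsupp.single w c) = Finsupp.single (j :: w) c := by
  simp [lvX, Finsupp.mapDomain_single]

theorem lvR_single (w : List (Fin n)) (c : F) :
    lvR F n (Finsupp.single w c) = Finsupp.single w.reverse c := by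
  simp [lvR, Finsupp.mapDomain_single]

theorem lvY_nil (i : Fin n) (c : F) :
    lvY F n i (Finsupp.single [] c) = 0 := by
  simp [lvY, lvYaux]

theorem lvY_cons (i j : Fin n) (w : List (Fin n)) (c : F) :
    lvY F n i (Finsupp.single (j :: w) c) = if i = j then Finsupp.single w c else 0 := by
  simp [lvY, lvYaux]

theorem lvYX (i j : Fin n) : lvY F n i * lvX F n j = if i = j then 1 else 0 := by
  refine Finsupp.lhom_ext fun w c => ?_
  rw [Module.End.mul_apply, lvX_single, lvY_cons]
  split_ifs <;> simp

theorem lvRR : lvR F n * lvR F n = 1 := by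
  refine Finsupp.lhom_ext fun w c => ?_
  rw [Module.End.mul_apply, lvR_single, lvR_single]
  simp

theorem lvXY : (∑ i, lvX F n i * lvY F n i) =
    1 - (Finsupp.lsingle [] ∘ₗ Finsupp.lapply [] : LvV F n →ₗ[F] LvV F n) := by
  refine Finsupp.lhom_ext fun w c => ?_
  cases w with
  | nil => simp [LinearMap.sum_apply, lvY_nil]
  | cons j w =>
    simp only [LinearMap.sum_apply, Module.End.mul_apply, lvY_cons, LinearMap.sub_apply,
      Module.End.one_apply, LinearMap.comp_apply, Finsupp.lapply_apply, Finsupp.lsingle_apply]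
    rw [Finset.sum_eq_single j]
    · simp [lvX_single]
    · intro b _ hb
      simp [hb]
    · simp

theorem lvRXR_comm (i j : Fin n) : (lvR F n * lvX F n i * lvR F n) * lvX F n j =
    lvX F n j * (lvR F n * lvX F n i * lvR F n) := by
  refine Finsupp.lhom_ext fun w c => ?_
  simp [Module.End.mul_apply, lvX_single, lvR_single]

/-- All prepending maps together. -/
noncomputable def lvRho (F : Type*) [Field F] (n : ℕ) : (Fin n → LvV F n) →ₗ[F] LvV F n :=
  ∑ j, lvX F n j ∘ₗ LinearMap.proj j

theorem lvRho_apply (u : Fin n → LvV F n) : lvRho F n u = ∑ j, lvX F n j (u j) := by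
  simp [lvRho, LinearMap.sum_apply]

theorem lvRho_fred : LvFred (lvRho F n) (-1) := by
  have hk : LinearMap.ker (lvRho F n) = ⊥ := by
    rw [LinearMap.ker_eq_bot']
    intro u hu
    rw [lvRho_apply] at hu
    funext i
    have h := congrArg (lvY F n i) hu
    rw [map_sum, map_zero] at h
    have h2 : ∀ j, lvY F n i (lvX F n j (u j)) = if i = j then u j else 0 := by
      intro j
      rw [← Module.End.mul_apply, lvYX]
      split_ifs <;> simp
    simpa [h2] using h
  have hr : LinearMap.range (lvRho F n) = LinearMap.ker (Finsupp.lapply [] : LvV F n →ₗ[F] F) := by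
    apply le_antisymm
    · rintro _ ⟨u, rfl⟩
      rw [LinearMap.mem_ker, lvRho_apply, map_sum]
      refine Finset.sum_eq_zero fun j _ => ?_
      rw [← LinearMap.comp_apply]
      have : (Finsupp.lapply [] : LvV F n →ₗ[F] F) ∘ₗ lvX F n j = 0 := by
        refine Finsupp.lhom_ext fun w c => ?_
        simp [lvX_single]
      rw [this]; rfl
    · intro v hv
      refine ⟨fun i => lvY F n i v, ?_⟩
      rw [lvRho_apply]
      have h := congrArg (fun T : Module.End F (LvV F n) => T v) (lvXY (F := F) (n := n))
      simp only [LinearMap.sum_apply, Module.End.mul_apply, LinearMap.sub_apply,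
        LinearMap.comp_apply] at h
      rw [LinearMap.mem_ker] at hv
      rw [h, hv]
      simp
  have hs : Function.Surjective (Finsupp.lapply [] : LvV F n →ₗ[F] F) :=
    fun c => ⟨Finsupp.single [] c, by simp⟩
  let E := (Finsupp.lapply [] : LvV F n →ₗ[F] F).quotKerEquivOfSurjective hs
  refine ⟨?_, ?_, ?_⟩
  · rw [hk]; infer_instance
  · rw [hr]; exact Module.Finite.equiv E.symm
  · rw [hk, hr, E.finrank_eq]; simp

end Toeplitz

section Abstract
variable {F : Type*} [Field F] {n : ℕ} {V : Type*} [AddCommGroup V] [Module F V]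
  (X Y : Fin n → Module.End F V) (R : Module.End F V)

theorem lv_finite_sum {W ι : Type*} [AddCommGroup W] [Module F W]
    (s : Finset ι) (f : ι → V →ₗ[F] W) (h : ∀ i ∈ s, (f i).HasFiniteRange) :
    (∑ i ∈ s, f i).HasFiniteRange := by
  classical
  induction s using Finset.induction_on with
  | empty => simp
  | insert a s ha ih =>
    rw [Finset.sum_insert ha]
    exact (h a (by simp)).add (ih fun i hi => h i (by simp [hi]))

/-- All maps together. -/
noncomputable def lvRhoA : (Fin n → V) →ₗ[F] V :=
  ∑ j, X j ∘ₗ LinearMap.proj j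

theorem lvRhoA_apply (u : Fin n → V) : lvRhoA X u = ∑ j, X j (u j) := by
  simp [lvRhoA, LinearMap.sum_apply]

theorem lv_core (hX : LvFred (lvRhoA X) (-1)) {l : ℕ} (A B : Fin l → Module.End F V)
    (hc : ∀ i j, (A i * X j - X j * A i).HasFiniteRange)
    (h1 : ∀ i j, (B i * A j - if i = j then 1 else 0).HasFiniteRange)
    (h2 : ((∑ i, A i * B i) - 1).HasFiniteRange) :
    ∃ d : ℤ, (n - 1) * d = 1 - l := by
  let a : (Fin l → V) →ₗ[F] V := ∑ i, A i ∘ₗ LinearMap.proj i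
  let b : V →ₗ[F] (Fin l → V) := LinearMap.pi B
  have ha : ∀ u, a u = ∑ i, A i (u i) := fun u => by simp [a, LinearMap.sum_apply]
  obtain ⟨d, hd⟩ : ∃ d, LvFred a d := by
    refine LvFred.exists_of_quasi a b ?_ ?_
    · have : b ∘ₗ a - LinearMap.id = ∑ i, ∑ j, LinearMap.single F (fun _ => V) i ∘ₗ
          (B i * A j - if i = j then 1 else 0) ∘ₗ LinearMap.proj j := by
        refine LinearMap.ext fun u => funext fun m => ?_
        simp only [LinearMap.sub_apply, LinearMap.comp_apply, ha, LinearMap.id_apply,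
          LinearMap.sum_apply, Finset.sum_apply, Pi.sub_apply, b, LinearMap.pi_apply, map_sum,
          LinearMap.proj_apply, LinearMap.single_apply]
        have hd : ∀ x, (if m = x then (1 : Module.End F V) else 0) (u x)
            = if m = x then u x else 0 := fun x => by split_ifs <;> simp
        symm
        refine (Finset.sum_eq_single m ?_ ?_).trans ?_
        · intro i _ hi
          exact Finset.sum_eq_zero fun j _ => Pi.single_eq_of_ne (Ne.symm hi) _
        · simp
        · simp only [Pi.single_eq_same, Finset.sum_sub_distrib, Module.End.mul_apply, hd]
          simp
      rw [this]
      exact lv_finite_sum _ _ fun i _ => lv_finite_sum _ _ fun j _ =>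
        ((h1 i j).comp_right _).comp_left _
    · have : a ∘ₗ b - LinearMap.id = (∑ i, A i * B i) - 1 := by
        refine LinearMap.ext fun u => ?_
        simp [ha, b, LinearMap.sum_apply]
      rw [this]
      exact h2
  -- compare the two composites
  let sw : (Fin l → Fin n → V) ≃ₗ[F] (Fin n → Fin l → V) :=
    { toFun := fun u i j => u j i
      invFun := fun u i j => u j i
      map_add' := fun _ _ => rfl
      map_smul' := fun _ _ => rfl
      left_inv := fun _ => rfl
      right_inv := fun _ => rfl }
  have f1 := (hX.pi l).comp hd
  have f2 := ((LvFred.of_equiv sw).comp (hd.pi n)).comp hX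
  have key := f1.congr f2 (by
    have : a ∘ₗ (lvRhoA X).compLeft (Fin l) -
        lvRhoA X ∘ₗ a.compLeft (Fin n) ∘ₗ (sw : _ →ₗ[F] _) =
        ∑ i, ∑ j, (A i * X j - X j * A i) ∘ₗ
          (LinearMap.proj j ∘ₗ LinearMap.proj i) := by
      refine LinearMap.ext fun u => ?_
      simp only [LinearMap.sub_apply, LinearMap.comp_apply, ha, lvRhoA_apply,
        LinearMap.compLeft_apply, LinearMap.sum_apply, Finset.sum_sub_distrib, map_sum,
        Module.End.mul_apply, LinearMap.proj_apply, Function.comp_apply]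
      congr 1
      rw [Finset.sum_comm]
      rfl
    rw [this]
    exact lv_finite_sum _ _ fun i _ => lv_finite_sum _ _ fun j _ => (hc i j).comp_right _)
  exact ⟨d, by linarith⟩

variable (F V) in
/-- Congruence modulo finite rank. -/
def lvCon : RingCon (Module.End F (V)) where
  r f g := (f - g).HasFiniteRange
  iseqv :=
    { refl := fun f => by rw [sub_self]; exact LinearMap.HasFiniteRange.zero
      symm := fun {f g} h => by simpa using h.neg
      trans := fun {f g h} h1 h2 => by simpa using h1.add h2 }
  add' := fun {a b c d} h1 h2 => by
    have : a + c - (b + d) = (a - b) + (c - d) := by abel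
    rw [this]; exact h1.add h2
  mul' := fun {a b c d} h1 h2 => by
    have : a * c - (b * d) = (a - b) * c + b * (c - d) := by noncomm_ring
    rw [this]; exact (h1.comp_right c).add (h2.comp_left b)

theorem lvCon_eq {f g : Module.End F (V)} :
    (lvCon F V).mk' f = (lvCon F V).mk' g ↔ (f - g).HasFiniteRange :=
  (lvCon F V).eq

/-- Images of the generators modulo finite rank. -/
noncomputable def lvGen : Fin n ⊕ Fin n → (lvCon F V).Quotient
  | .inl i => (lvCon F V).mk' (R * X i * R)
  | .inr i => (lvCon F V).mk' (R * Y i * R)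

theorem lvGen_ck1 (hYX : ∀ i j, Y i * X j = if i = j then 1 else 0) (hRR : R * R = 1) (i j : Fin n) :
    lvGen X Y R (.inr i) * lvGen X Y R (.inl j) = if i = j then 1 else 0 := by
  simp only [lvGen]
  rw [← map_mul]
  have : R * Y i * R * (R * X j * R) =
      R * (Y i * ((R * R) * (X j * R))) := by
    simp only [mul_assoc]
  rw [this, hRR, one_mul, ← mul_assoc (Y i), hYX]
  split_ifs <;> simp [hRR]

theorem lvGen_ck2 (hRR : R * R = 1) (P : Module.End F V) (hP : P.HasFiniteRange)
    (hXY : ∑ i, X i * Y i = 1 - P) : ∑ i, lvGen X Y R (.inl i) * lvGen X Y R (.inr i) = 1 := by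
  simp only [lvGen]
  simp_rw [← map_mul]
  rw [← map_sum, ← map_one (lvCon F V).mk', lvCon_eq]
  have : ∀ i, R * X i * R * (R * Y i * R) =
      R * (X i * Y i) * R := by
    intro i
    have : R * X i * R * (R * Y i * R) =
      R * (X i * ((R * R) * (Y i * R))) := by
      simp only [mul_assoc]
    rw [this, hRR, one_mul]
    simp only [mul_assoc]
  simp_rw [this]
  rw [← Finset.sum_mul, ← Finset.mul_sum, hXY, mul_sub, sub_mul, mul_one, hRR, sub_sub_cancel_left]
  exact ((hP.comp_left R).comp_right R).neg

theorem lvGen_comm (hYX : ∀ i j, Y i * X j = if i = j then 1 else 0) (hRR : R * R = 1)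
    (P : Module.End F V) (hP : P.HasFiniteRange) (hXY : ∑ i, X i * Y i = 1 - P)
    (hco : ∀ i j, (R * X i * R) * X j = X j * (R * X i * R)) (s : Fin n ⊕ Fin n) (j : Fin n) :
    Commute (lvGen X Y R s) ((lvCon F V).mk' (X j)) := by
  have hx : ∀ i, Commute (lvGen X Y R (.inl i)) ((lvCon F V).mk' (X j)) := by
    intro i
    simp only [lvGen, Commute, SemiconjBy]
    rw [← map_mul, ← map_mul, hco]
  cases s with
  | inl i => exact hx i
  | inr i =>
    set r := (lvCon F V).mk' (X j) with hr
    calc lvGen X Y R (.inr i) * r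
        = lvGen X Y R (.inr i) * r * ∑ m, lvGen X Y R (.inl m) * lvGen X Y R (.inr m) := by
          rw [lvGen_ck2 X Y R hRR P hP hXY, mul_one]
      _ = ∑ m, (lvGen X Y R (.inr i) * lvGen X Y R (.inl m)) * (r * lvGen X Y R (.inr m)) := by
          rw [Finset.mul_sum]
          refine Finset.sum_congr rfl fun m _ => ?_
          have := (hx m).eq
          calc _ = lvGen X Y R (.inr i) * (r * lvGen X Y R (.inl m)) * lvGen X Y R (.inr m) := by
                simp only [mul_assoc]
            _ = _ := by rw [← this]; simp only [mul_assoc]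
      _ = r * lvGen X Y R (.inr i) := by
          simp [lvGen_ck1 X Y R hYX hRR]

end Abstract

theorem lv_part_two (k F : Type*) [CommRing k] [Field F] [Algebra k F] (n l : ℕ)
    (V : Type*) [AddCommGroup V] [Module F V] [Module k V] [IsScalarTower k F V]
    (X Y : Fin n → Module.End F V) (R P : Module.End F V)
    (hYX : ∀ i j, Y i * X j = if i = j then 1 else 0) (hRR : R * R = 1)
    (hP : P.HasFiniteRange) (hXY : ∑ i, X i * Y i = 1 - P)
    (hco : ∀ i j, (R * X i * R) * X j = X j * (R * X i * R))
    (hX : LvFred (lvRhoA X) (-1))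
    (a b : Fin l → RingQuot (LeavittRel k n))
    (h1 : ∀ i j, b i * a j = if i = j then 1 else 0) (h2 : ∑ i, a i * b i = 1) :
    ∃ d : ℤ, (n - 1) * d = 1 - l := by
  let φ : FreeAlgebra k (Fin n ⊕ Fin n) →ₐ[k] (lvCon F V).Quotient :=
    FreeAlgebra.lift k (lvGen X Y R)
  have hφ : ∀ ⦃x y⦄, LeavittRel k n x y → φ x = φ y := by
    intro x y h
    cases h with
    | ck1 i j =>
      simp only [φ, map_mul, FreeAlgebra.lift_ι_apply, lvGen_ck1 X Y R hYX hRR]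
      split_ifs <;> simp
    | ck2 =>
      simp only [φ, map_sum, map_mul, FreeAlgebra.lift_ι_apply, lvGen_ck2 X Y R hRR P hP hXY, map_one]
  let Φ : RingQuot (LeavittRel k n) →ₐ[k] (lvCon F V).Quotient :=
    RingQuot.liftAlgHom k ⟨φ, hφ⟩
  have hcomm : ∀ x j, Commute (Φ x) ((lvCon F V).mk' (X j)) := by
    intro x j
    obtain ⟨x, rfl⟩ := RingQuot.mkAlgHom_surjective k _ x
    rw [RingQuot.liftAlgHom_mkAlgHom_apply]
    induction x using FreeAlgebra.induction with
    | grade0 r => rw [AlgHom.commutes]; exact Algebra.commutes _ _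
    | grade1 s => simpa [φ] using lvGen_comm X Y R hYX hRR P hP hXY hco s j
    | mul x y hx hy => rw [map_mul]; exact hx.mul_left hy
    | add x y hx hy => rw [map_add]; exact hx.add_left hy
  have hs : Function.Surjective (lvCon F V).mk' := (lvCon F V).mk'_surjective
  choose A hA using fun i => hs (Φ (a i))
  choose B hB using fun i => hs (Φ (b i))
  refine lv_core X hX A B ?_ ?_ ?_
  · intro i j
    rw [← lvCon_eq, map_mul, map_mul, hA]
    exact hcomm _ _
  · intro i j
    rw [← lvCon_eq, map_mul, hA, hB, ← map_mul, h1]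
    split_ifs <;> simp
  · rw [← lvCon_eq, map_sum]
    simp only [map_mul, hA, hB, map_one]
    simp only [← map_mul, ← map_sum, h2, map_one]

/-- The Leavitt algebra `L` over a nontrivial commutative ring `k`, with `n ≥ 2`, the quotient
of the free algebra on `2n` generators by the Cuntz–Krieger relations, has module type `(1, n)`:
`L ≅ Lⁿ` as left `L`-modules, and whenever `L ≅ Lˡ` (with `l ≥ 1`) one has `n - 1 ∣ l - 1`. -/
theorem stmt5 (k : Type*) [CommRing k] [Nontrivial k] (n : ℕ) (hn : 2 ≤ n) :
    Nonempty (RingQuot (LeavittRel k n) ≃ₗ[RingQuot (LeavittRel k n)]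
        (Fin n → RingQuot (LeavittRel k n))) ∧
      ∀ l : ℕ, 1 ≤ l →
        Nonempty (RingQuot (LeavittRel k n) ≃ₗ[RingQuot (LeavittRel k n)]
          (Fin l → RingQuot (LeavittRel k n))) →
        (n - 1) ∣ (l - 1) := by
  constructor
  · let x : Fin n → RingQuot (LeavittRel k n) := fun i =>
      RingQuot.mkAlgHom k _ (FreeAlgebra.ι k (Sum.inl i))
    let y : Fin n → RingQuot (LeavittRel k n) := fun i =>
      RingQuot.mkAlgHom k _ (FreeAlgebra.ι k (Sum.inr i))
    have h1 : ∀ i j, y i * x j = if i = j then 1 else 0 := by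
      intro i j
      have := RingQuot.mkAlgHom_rel k (LeavittRel.ck1 (k := k) i j)
      rw [map_mul] at this
      rw [this]
      split_ifs <;> simp
    have h2 : ∑ i, x i * y i = 1 := by
      have := RingQuot.mkAlgHom_rel k (LeavittRel.ck2 (k := k) (n := n))
      simpa only [map_sum, map_mul, map_one] using this
    exact ⟨{
      toFun := fun r i => r * x i
      invFun := fun v => ∑ i, v i * y i
      map_add' := fun r s => by funext i; simp [add_mul]
      map_smul' := fun r s => by funext i; simp [mul_assoc]
      left_inv := fun r => by
        simp only [mul_assoc]
        rw [← Finset.mul_sum, h2, mul_one]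
      right_inv := fun v => by
        funext j
        simp [Finset.sum_mul, mul_assoc, h1] }⟩
  · rintro l hl ⟨e⟩
    obtain ⟨m, hm⟩ := Ideal.exists_maximal k
    let _ : Field (k ⧸ m) := Ideal.Quotient.field m
    have he : ∀ r i, e r i = r * e 1 i := by
      intro r i
      have := congrFun (e.map_smul r 1) i
      simpa using this
    have hsum : ∀ v, e.symm v = ∑ i, v i * e.symm (Pi.single i 1) := by
      intro v
      conv_lhs => rw [pi_eq_sum_univ' v]
      rw [map_sum]
      refine Finset.sum_congr rfl fun i _ => ?_
      rw [map_smul, smul_eq_mul]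
    obtain ⟨d, hd⟩ := lv_part_two k (k ⧸ m) n l (LvV (k ⧸ m) n)
      (lvX _ n) (lvY _ n) (lvR _ n) (Finsupp.lsingle [] ∘ₗ Finsupp.lapply []) lvYX lvRR
      (LinearMap.HasFiniteRange.comp_left (by simp) _) lvXY lvRXR_comm lvRho_fred (fun i => e 1 i)
      (fun i => e.symm (Pi.single i 1))
      (by
        intro i j
        rw [← he, LinearEquiv.apply_symm_apply, Pi.single_apply]
        simp [eq_comm])
      (by rw [← hsum, LinearEquiv.symm_apply_apply])
    have : ((n - 1 : ℕ) : ℤ) ∣ ((l - 1 : ℕ) : ℤ) := by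
      rw [Nat.cast_sub (by omega), Nat.cast_sub hl]
      exact ⟨-d, by push_cast; linarith⟩
    exact_mod_cast this
end

section
/- Let S be a division ring, n ≥ 1, and R = MonoidAlgebra S (FreeMonoid (Fin n)) the free S-algebra on x_1, …, x_n (the elements of S commuting with the x_i). Let ε : R → S be the augmentation sending every x_i to 0, and I = ker ε (the two-sided ideal generated by x_1, …, x_n). For a left R-module M, the following are equivalent: (1) M is a Sato module, i.e., M is finitely presented (there is an exact sequence R^p → R^q → M → 0 of left R-modules with p, q finite) and the map (Fin n → M) → M, (m_1, …, m_n) ↦ Σ_{i=1}^n x_i • m_i, is bijective; (2) there exist l : ℕ and a matrix Q : Matrix (Fin l) (Fin l) R with every entry in I such that M is isomorphic, as a left R-module, to the cokernel of the left R-linear endomorphism of R^l = (Fin l → R) given by right multiplication by the matrix 1 + Q, i.e., v ↦ (j ↦ Σ_i v_i · (1 + Q)_{ij}). -/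
/-- The value of the monoid homomorphism sending every free-monoid generator to `0`
is either `1` (on the empty word) or `0`. -/
theorem freeMonoidLiftZero_eq (S : Type*) [Semiring S] (n : ℕ)
    (y : FreeMonoid (Fin n)) :
    (FreeMonoid.lift fun _ => (0 : S)) y = 0 ∨ (FreeMonoid.lift fun _ => (0 : S)) y = 1 := by
  induction y using FreeMonoid.inductionOn with
  | one => right; simp
  | of x => left; simp
  | mul a b iha ihb =>
      rw [map_mul]
      rcases iha with h | h <;> rcases ihb with h' | h' <;> simp [h, h']

/-- The augmentation of the free algebra `R = S⟨x_1, …, x_n⟩`: the ring homomorphism to `S`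
sending each `x i` to `0` and restricting to the identity on `S`. -/
noncomputable def freeAlgAug (S : Type*) [Semiring S] (n : ℕ) :
    MonoidAlgebra S (FreeMonoid (Fin n)) →+* S :=
  MonoidAlgebra.liftNCRingHom (RingHom.id S)
    (FreeMonoid.lift fun _ => (0 : S))
    (fun x y => by
      rcases freeMonoidLiftZero_eq S n y with h | h <;>
        simp [Commute, SemiconjBy, h])

namespace SatoAux

abbrev FA (S : Type*) [Semiring S] (n : ℕ) := MonoidAlgebra S (FreeMonoid (Fin n))

section basic
variable {S : Type*} [DivisionRing S] {n : ℕ}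

noncomputable abbrev X (i : Fin n) : FA S n := MonoidAlgebra.of S (FreeMonoid (Fin n)) (FreeMonoid.of i)

noncomputable abbrev C : S →+* FA S n := MonoidAlgebra.singleOneRingHom

theorem X_C (i : Fin n) (s : S) : (X i : FA S n) * C s = C s * X i := by
  simp [X, C, MonoidAlgebra.singleOneRingHom]

theorem fa_induction {motive : FA S n → Prop} (r : FA S n) (one : motive 1)
    (add : ∀ a b, motive a → motive b → motive (a + b))
    (hC : ∀ s a, motive a → motive (C s * a))
    (hX : ∀ i a, motive a → motive (X i * a)) : motive r := by
  have hsm : ∀ w : FreeMonoid (Fin n), motive (MonoidAlgebra.single w 1) := by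
    intro w
    induction w using FreeMonoid.inductionOn' with
    | one => exact one
    | of_mul i w ih =>
      have := hX i _ ih
      simpa [X] using this
  induction r using MonoidAlgebra.induction_linear with
  | zero => simpa using hC 0 1 one
  | add a b ha hb => exact add a b ha hb
  | single w s =>
    have := hC s _ (hsm w)
    simpa [C, MonoidAlgebra.singleOneRingHom] using this

theorem aug_X (i : Fin n) : freeAlgAug S n (X i) = 0 := by
  simp [freeAlgAug, X, MonoidAlgebra.liftNCRingHom]

theorem aug_C (s : S) : freeAlgAug S n (C s) = s := by
  simp [freeAlgAug, C, MonoidAlgebra.singleOneRingHom, MonoidAlgebra.liftNCRingHom]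

theorem decomp (r : FA S n) : ∃ t : Fin n → FA S n,
    r = C (freeAlgAug S n r) + ∑ i, X i * t i := by
  induction r using fa_induction with
  | one => exact ⟨0, by simp only [map_one, Pi.zero_apply, mul_zero, Finset.sum_const_zero, add_zero]⟩
  | add a b ha hb =>
    obtain ⟨t, ht⟩ := ha
    obtain ⟨u, hu⟩ := hb
    refine ⟨t + u, ?_⟩
    conv_lhs => rw [ht, hu]
    simp only [Pi.add_apply, mul_add, Finset.sum_add_distrib, map_add]
    abel
  | hC s a ha =>
    obtain ⟨t, ht⟩ := ha
    refine ⟨fun i => C s * t i, ?_⟩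
    conv_lhs => rw [ht]
    rw [mul_add, map_mul, aug_C, map_mul, Finset.mul_sum]
    simp only [← mul_assoc, X_C]
  | hX i a ha =>
    refine ⟨Pi.single i a, ?_⟩
    rw [map_mul, aug_X, zero_mul, map_zero, zero_add, Finset.sum_eq_single i]
    · simp
    · intro j _ hj; simp [hj]
    · simp

theorem X_mul_indep (t : Fin n → FA S n) (h : ∑ i, X i * t i = 0) : t = 0 := by
  funext i
  ext w
  have h1 := congrArg (fun r => MonoidAlgebra.coeff r (FreeMonoid.of i * w)) h
  simp only [MonoidAlgebra.coeff_sum, Finsupp.finsetSum_apply] at h1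
  rw [Finset.sum_eq_single i] at h1
  · simpa [X] using h1
  · intro j _ hj
    simp only [X, MonoidAlgebra.of_apply]
    apply MonoidAlgebra.coeff_single_mul_of_forall_mul_ne
    intro d hd
    have := congrArg FreeMonoid.toList hd
    simp at this
    exact hj this.1
  · simp

end basic

section inj
variable {S : Type*} [DivisionRing S] {n l : ℕ} {N M : Type*} [AddCommGroup N] [Module (FA S n) N]
  [AddCommGroup M] [Module (FA S n) M]

inductive P (e : Fin l → N) : N → Prop
  | base (c : Fin l → S) : P e (∑ a, (C (c a) : FA S n) • e a)
  | step (u : Fin n → N) (h : ∀ i, P e (u i)) : P e (∑ i, (X i : FA S n) • u i)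

variable (e : Fin l → N)

theorem base_eq (D : Fin n → Fin l → Fin l → S)
    (he : ∀ a, e a = ∑ i, (X i : FA S n) • ∑ b, (C (D i a b) : FA S n) • e b)
    (c : Fin l → S) : ∑ a, (C (c a) : FA S n) • e a =
    ∑ i, (X i : FA S n) • ∑ b, (C (∑ a, c a * D i a b) : FA S n) • e b := by
  have h1 : ∀ a, (C (c a) : FA S n) • e a = 
      ∑ i, (X i : FA S n) • ∑ b, (C (c a * D i a b) : FA S n) • e b := by
    intro a
    conv_lhs => rw [he a]
    simp only [Finset.smul_sum, smul_smul, map_mul, ← mul_assoc, ← X_C]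
  simp_rw [h1, map_sum, Finset.sum_smul, Finset.smul_sum]
  rw [Finset.sum_comm]
  refine Finset.sum_congr rfl fun i _ => ?_
  rw [Finset.sum_comm]

theorem P_base_add (D : Fin n → Fin l → Fin l → S)
    (he : ∀ a, e a = ∑ i, (X i : FA S n) • ∑ b, (C (D i a b) : FA S n) • e b)
    (u : N) (hu : P (S := S) (n := n) e u) : ∀ c : Fin l → S, 
    P (S := S) (n := n) e (∑ a, (C (c a) : FA S n) • e a + u) := by
  induction hu with
  | base d =>
    intro c
    rw [← Finset.sum_add_distrib]
    simp_rw [← add_smul, ← map_add]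
    exact P.base (fun a => c a + d a)
  | step u h ih =>
    intro c
    rw [base_eq e D he, ← Finset.sum_add_distrib]
    simp_rw [← smul_add]
    exact P.step _ fun i => ih i _

theorem P_add (D : Fin n → Fin l → Fin l → S)
    (he : ∀ a, e a = ∑ i, (X i : FA S n) • ∑ b, (C (D i a b) : FA S n) • e b)
    (u : N) (hu : P (S := S) (n := n) e u) : ∀ v, P (S := S) (n := n) e v → 
    P (S := S) (n := n) e (u + v) := by
  induction hu with
  | base d => intro v hv; exact P_base_add e D he v hv d
  | step u h ih =>
    intro v hv
    cases hv with
    | base c => rw [add_comm]; exact P_base_add e D he _ (P.step u h) c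
    | step v hv =>
      rw [← Finset.sum_add_distrib]
      simp_rw [← smul_add]
      exact P.step _ fun i => ih i _ (hv i)

theorem P_zero : P (S := S) (n := n) e 0 := by
  simpa using P.base (S := S) (n := n) (e := e) 0

theorem P_C (s : S) (u : N) (hu : P (S := S) (n := n) e u) :
    P (S := S) (n := n) e ((C s : FA S n) • u) := by
  induction hu with
  | base d =>
    simp_rw [Finset.smul_sum, smul_smul, ← map_mul]
    exact P.base (fun a => s * d a)
  | step u h ih =>
    simp_rw [Finset.smul_sum, smul_smul, ← X_C, mul_smul]
    exact P.step _ ih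

theorem P_X (i : Fin n) (u : N) (hu : P (S := S) (n := n) e u) :
    P (S := S) (n := n) e ((X i : FA S n) • u) := by
  have : (X i : FA S n) • u = ∑ j, (X j : FA S n) • (Pi.single i u : Fin n → N) j := by
    rw [Finset.sum_eq_single i]
    · simp
    · intro j _ hj; simp [hj]
    · simp
  rw [this]
  refine P.step _ fun j => ?_
  by_cases h : j = i
  · subst h; simpa using hu
  · simpa [h] using P_zero e

theorem P_all (D : Fin n → Fin l → Fin l → S)
    (he : ∀ a, e a = ∑ i, (X i : FA S n) • ∑ b, (C (D i a b) : FA S n) • e b)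
    (hs : Submodule.span (FA S n) (Set.range e) = ⊤) (u : N) : 
    P (S := S) (n := n) e u := by
  have hu : u ∈ Submodule.span (FA S n) (Set.range e) := hs ▸ Submodule.mem_top
  induction hu using Submodule.span_induction with
  | mem x hx =>
    obtain ⟨a, rfl⟩ := hx
    have := P.base (S := S) (n := n) (e := e) (Pi.single a 1)
    rw [Finset.sum_eq_single a] at this
    · simpa only [Pi.single_eq_same, map_one, one_smul] using this
    · intro b _ hb; rw [Pi.single_eq_of_ne hb, map_zero, zero_smul]
    · simp
  | zero => exact P_zero e
  | add x y _ _ hx hy => exact P_add e D he _ hx _ hy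
  | smul r x _ hx =>
    induction r using fa_induction with
    | one => simpa using hx
    | add a b ha hb => rw [add_smul]; exact P_add e D he _ ha _ hb
    | hC s a ha => rw [mul_smul]; exact P_C e _ _ ha
    | hX i a ha => rw [mul_smul]; exact P_X e _ _ ha

theorem pi_inj (D : Fin n → Fin l → Fin l → S)
    (he : ∀ a, e a = ∑ i, (X i : FA S n) • ∑ b, (C (D i a b) : FA S n) • e b)
    (hs : Submodule.span (FA S n) (Set.range e) = ⊤) (π : N →ₗ[FA S n] M)
    (hlin : ∀ c : Fin l → S, ∑ a, (C (c a) : FA S n) • π (e a) = 0 → c = 0)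
    (hM : ∀ m : Fin n → M, ∑ i, (X i : FA S n) • m i = 0 → m = 0) : Function.Injective π := by
  rw [injective_iff_map_eq_zero]
  intro u
  have hu := P_all e D he hs u
  induction hu with
  | base c =>
    intro h
    simp only [map_sum, map_smul] at h
    simp [hlin c h]
  | step u _ ih =>
    intro h
    simp only [map_sum, map_smul] at h
    have := hM _ h
    exact Finset.sum_eq_zero fun i _ => by rw [ih i (congrFun this i), smul_zero]
end inj

section lattice
variable {S : Type*} [DivisionRing S] {n : ℕ} {M : Type*} 
  [AddCommGroup M] [Module (FA S n) M] [Module S M]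
  (hC : ∀ (s : S) (m : M), s • m = (C s : FA S n) • m)

/-- Left multiplication by a variable as an `S`-linear map. -/
noncomputable def LX (hC : ∀ (s : S) (m : M), s • m = (C s : FA S n) • m) (i : Fin n) : M →ₗ[S] M where
  toFun m := (X i : FA S n) • m
  map_add' := smul_add _
  map_smul' s m := by
    simp only [RingHom.id_apply, hC, smul_smul, X_C]

noncomputable def VV (W : Submodule S M) : ℕ → Submodule S M
  | 0 => W
  | d + 1 => W ⊔ ⨆ i, (VV W d).map (LX hC i)

theorem VV_fg (W : Submodule S M) (hW : W.FG) (d : ℕ) : (VV hC W d).FG := by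
  induction d with
  | zero => exact hW
  | succ d ih => exact hW.sup (Submodule.fg_iSup _ fun i => ih.map _)

theorem VV_step (W : Submodule S M) (d : ℕ) : VV hC W d ≤ VV hC W (d + 1) := by
  induction d with
  | zero => exact le_sup_left
  | succ d ih => 
    exact sup_le_sup_left (iSup_mono fun i => Submodule.map_mono ih) _

theorem VV_mono (W : Submodule S M) : Monotone (VV hC W) := monotone_nat_of_le_succ (VV_step hC W)

theorem VV_X (W : Submodule S M) (d : ℕ) (i : Fin n) (m : M) (hm : m ∈ VV hC W d) :
    (X i : FA S n) • m ∈ VV hC W (d + 1) :=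
  (le_sup_right : _ ≤ VV hC W (d + 1)) (Submodule.mem_iSup_of_mem i ⟨m, hm, rfl⟩)

theorem VV_all (W : Submodule S M) (hW : Submodule.span (FA S n) (W : Set M) = ⊤) (m : M) :
    ∃ d, m ∈ VV hC W d := by
  have hm : m ∈ Submodule.span (FA S n) (W : Set M) := hW ▸ Submodule.mem_top
  have hadd : ∀ x y : M, (∃ d, x ∈ VV hC W d) → (∃ d, y ∈ VV hC W d) → 
      (∃ d, x + y ∈ VV hC W d) := by
    rintro x y ⟨d, hd⟩ ⟨k, hk⟩
    exact ⟨max d k, add_mem (VV_mono hC W (le_max_left _ _) hd) (VV_mono hC W (le_max_right _ _) hk)⟩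
  induction hm using Submodule.span_induction with
  | mem x hx => exact ⟨0, hx⟩
  | zero => exact ⟨0, zero_mem _⟩
  | add x y _ _ hx hy => exact hadd _ _ hx hy
  | smul r x _ hx =>
    induction r using fa_induction with
    | one => simpa using hx
    | add a b ha hb => rw [add_smul]; exact hadd _ _ ha hb
    | hC s a ha =>
      obtain ⟨d, hd⟩ := ha
      refine ⟨d, ?_⟩
      rw [mul_smul, ← hC]
      exact Submodule.smul_mem _ _ hd
    | hX i a ha =>
      obtain ⟨d, hd⟩ := ha
      refine ⟨d + 1, ?_⟩
      rw [mul_smul]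
      exact VV_X hC W d i _ hd

theorem exists_lattice (hC : ∀ (s : S) (m : M), s • m = (C s : FA S n) • m)
    (W : Submodule S M) (hWfg : W.FG)
    (hW : Submodule.span (FA S n) (W : Set M) = ⊤)
    (hsurj : ∀ m : M, ∃ t : Fin n → M, m = ∑ i, (X i : FA S n) • t i) :
    ∃ V : Submodule S M, V.FG ∧ Submodule.span (FA S n) (V : Set M) = ⊤ ∧
      ∀ v ∈ V, ∃ t : Fin n → M, (∀ i, t i ∈ V) ∧ v = ∑ i, (X i : FA S n) • t i := by
  -- bound for generators
  have key : ∃ d, ∀ w ∈ W, ∃ t : Fin n → M, (∀ i, t i ∈ VV hC W d) ∧ 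
      w = ∑ i, (X i : FA S n) • t i := by
    obtain ⟨G, rfl⟩ := hWfg
    choose t ht using hsurj
    choose k hk using VV_all hC _ hW
    refine ⟨G.sup fun w => Finset.univ.sup fun i => k (t w i), fun w hw => ?_⟩
    set V := VV hC (Submodule.span S (G : Set M)) (G.sup fun w => Finset.univ.sup fun i => k (t w i)) with hV
    clear_value V
    induction hw using Submodule.span_induction with
    | mem x hx =>
      refine ⟨t x, fun i => ?_, ht x⟩
      rw [hV]
      refine VV_mono hC _ ?_ (hk (t x i))
      exact (Finset.le_sup (f := fun i => k (t x i)) (Finset.mem_univ i)).trans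
        (Finset.le_sup (f := fun w => Finset.univ.sup fun i => k (t w i)) hx)
    | zero => exact ⟨0, fun i => zero_mem _, by simp⟩
    | add x y _ _ hx hy =>
      obtain ⟨t, h1, h2⟩ := hx
      obtain ⟨u, h3, h4⟩ := hy
      refine ⟨t + u, fun i => add_mem (h1 i) (h3 i), ?_⟩
      rw [h2, h4]
      simp [smul_add, Finset.sum_add_distrib]
    | smul s x _ hx =>
      obtain ⟨t, h1, h2⟩ := hx
      refine ⟨fun i => s • t i, fun i => Submodule.smul_mem _ _ (h1 i), ?_⟩
      conv_lhs => rw [h2]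
      simp only [hC, Finset.smul_sum, smul_smul, X_C]
  obtain ⟨d, hd⟩ := key
  refine ⟨VV hC W (d + 1), VV_fg hC W hWfg _, ?_, ?_⟩
  · rw [eq_top_iff, ← hW]
    exact Submodule.span_mono (VV_mono hC W (Nat.zero_le (d + 1)))
  · intro v hv
    obtain ⟨w, hw, z, hz, rfl⟩ := Submodule.mem_sup.1 hv
    rw [Submodule.mem_iSup_iff_exists_finsupp] at hz
    obtain ⟨f, hf, rfl⟩ := hz
    choose g hg hg2 using hf
    obtain ⟨t, h1, h2⟩ := hd w hw
    refine ⟨t + g, fun i => VV_step hC W d (add_mem (h1 i) (hg i)), ?_⟩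
    rw [Finsupp.sum_fintype _ _ (fun _ => rfl)]
    simp only [Pi.add_apply, smul_add, Finset.sum_add_distrib, ← h2, ← hg2]
    rfl
end lattice

theorem forward (S : Type*) [DivisionRing S] (n : ℕ)
    (M : Type*) [AddCommGroup M] [Module (FA S n) M] (q : ℕ)
    (g : (Fin q → FA S n) →ₗ[FA S n] M) (hg : Function.Surjective g)
    (hb : Function.Bijective (fun m : Fin n → M => ∑ i : Fin n, (X i : FA S n) • m i)) :
    ∃ (l : ℕ) (Q : Matrix (Fin l) (Fin l) (FA S n)),
      (∀ i j, Q i j ∈ RingHom.ker (freeAlgAug S n)) ∧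
      Nonempty (M ≃ₗ[FA S n] ((Fin l → FA S n) ⧸ LinearMap.range (Matrix.vecMulLinear (1 + Q)))) := by
  letI : Module S M := Module.compHom M (C : S →+* FA S n)
  have hC : ∀ (s : S) (m : M), s • m = (C s : FA S n) • m := fun _ _ => rfl
  have hinj : ∀ m : Fin n → M, ∑ i, (X i : FA S n) • m i = 0 → m = 0 := 
    fun m hm => hb.1 (by simpa using hm)
  have hsurj : ∀ m : M, ∃ t : Fin n → M, m = ∑ i, (X i : FA S n) • t i := fun m =>
    (hb.2 m).imp fun _ h => h.symm
  let G : Set M := Set.range fun j => g (Pi.single j 1)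
  have hG : Submodule.span (FA S n) G = ⊤ := by
    rw [eq_top_iff]
    intro m _
    obtain ⟨v, rfl⟩ := hg m
    rw [pi_eq_sum_univ' v, map_sum]
    refine sum_mem fun j _ => ?_
    rw [map_smul]
    refine Submodule.smul_mem _ _ (Submodule.subset_span ⟨j, ?_⟩)
    congr 1
  obtain ⟨V, hVfg, hVs, hV⟩ := exists_lattice hC (Submodule.span S G)
    (Submodule.fg_span (Set.finite_range _)) (by
      rw [eq_top_iff, ← hG]; exact Submodule.span_mono Submodule.subset_span) hsurj
  haveI : Module.Finite S V := Module.Finite.of_fg hVfg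
  let bs := Module.finBasis S V
  let l := Module.finrank S V
  have h1 : ∀ a : Fin l, ∃ D : Fin n → Fin l → S, 
      (bs a : M) = ∑ i, (X i : FA S n) • ∑ b, (C (D i b) : FA S n) • (bs b : M) := by
    intro a
    obtain ⟨t, ht, h2⟩ := hV _ (bs a).2
    refine ⟨fun i b => bs.repr ⟨t i, ht i⟩ b, ?_⟩
    rw [h2]
    refine Finset.sum_congr rfl fun i _ => ?_
    congr 1
    have := congrArg (Subtype.val) (bs.sum_repr ⟨t i, ht i⟩)
    simp only [AddSubmonoidClass.coe_finsetSum, Submodule.coe_smul, hC] at this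
    exact this.symm
  choose D hD using h1
  let Q : Matrix (Fin l) (Fin l) (FA S n) := fun a b => - ∑ i, X i * C (D a i b)
  refine ⟨l, Q, ?_, ?_⟩
  · intro a b
    rw [RingHom.mem_ker]
    simp only [Q, map_neg, map_sum, map_mul, aug_X, zero_mul, Finset.sum_const_zero, neg_zero]
  let π0 : (Fin l → FA S n) →ₗ[FA S n] M := Fintype.linearCombination (FA S n) (fun a => (bs a : M))
  have hπ0 : ∀ v, π0 v = ∑ a, v a • (bs a : M) := fun v => rfl
  have hrow : ∀ a, π0 ((1 + Q) a) = 0 := by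
    intro a
    simp only [hπ0, Matrix.add_apply, add_smul, Finset.sum_add_distrib, Matrix.one_apply, ite_smul, one_smul, zero_smul,
      Finset.sum_ite_eq, Finset.mem_univ, if_true]
    conv_lhs => enter [1]; rw [hD a]
    simp only [Q, neg_smul, Finset.sum_neg_distrib, Finset.sum_smul, Finset.smul_sum, mul_smul]
    rw [Finset.sum_comm]
    simp
  have hker : LinearMap.range (Matrix.vecMulLinear (1 + Q)) ≤ LinearMap.ker π0 := by
    rintro _ ⟨v, rfl⟩
    rw [LinearMap.mem_ker, Matrix.vecMulLinear_apply, Matrix.vecMul_eq_sum, map_sum]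
    refine Finset.sum_eq_zero fun a _ => ?_
    rw [map_smul]
    exact (congrArg _ (hrow a)).trans (smul_zero _)
  let π := Submodule.liftQ _ π0 hker
  let e : Fin l → ((Fin l → FA S n) ⧸ LinearMap.range (Matrix.vecMulLinear (1 + Q))) :=
    fun a => Submodule.mkQ _ (Pi.single a 1)
  have hπe : ∀ a, π (e a) = bs a := by
    intro a
    simp only [π, e, Submodule.mkQ_apply, Submodule.liftQ_apply, π0]
    rw [Fintype.linearCombination_apply_single, one_smul]
  have hvec : ∀ v : Fin l → FA S n, Submodule.mkQ (LinearMap.range (Matrix.vecMulLinear (1 + Q))) v 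
      = ∑ a, v a • e a := by
    intro v
    conv_lhs => rw [← Finset.univ_sum_single v]
    rw [map_sum]
    refine Finset.sum_congr rfl fun a _ => ?_
    rw [← map_smul]
    congr 1
    ext b
    simp [Pi.single_apply]
  have he : ∀ a, e a = ∑ i, (X i : FA S n) • ∑ b, (C (D a i b) : FA S n) • e b := by
    intro a
    have h0 : Submodule.mkQ (LinearMap.range (Matrix.vecMulLinear (1 + Q))) ((1 + Q) a) = 0 := by
      rw [Submodule.mkQ_apply, Submodule.Quotient.mk_eq_zero]
      exact ⟨Pi.single a 1, by rw [Matrix.vecMulLinear_apply, Matrix.single_one_vecMul]; rfl⟩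
    rw [hvec] at h0
    simp only [Matrix.add_apply, add_smul, Finset.sum_add_distrib, Matrix.one_apply, ite_smul, one_smul, zero_smul,
      Finset.sum_ite_eq, Finset.mem_univ, if_true] at h0
    rw [eq_neg_of_add_eq_zero_left h0]
    simp only [Q, neg_smul, Finset.sum_neg_distrib, neg_neg, Finset.sum_smul, Finset.smul_sum, mul_smul]
    rw [Finset.sum_comm]
  have hes : Submodule.span (FA S n) (Set.range e) = ⊤ := by
    rw [eq_top_iff]
    intro u _
    obtain ⟨v, rfl⟩ := Submodule.mkQ_surjective _ u
    rw [hvec]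
    exact sum_mem fun a _ => Submodule.smul_mem _ _ (Submodule.subset_span ⟨a, rfl⟩)
  have hlin : ∀ c : Fin l → S, ∑ a, (C (c a) : FA S n) • π (e a) = 0 → c = 0 := by
    intro c hc
    simp only [hπe, ← hC] at hc
    have : ∑ a, c a • bs a = 0 := by
      apply Subtype.ext
      simpa only [AddSubmonoidClass.coe_finsetSum, Submodule.coe_smul, ZeroMemClass.coe_zero] using hc
    funext a
    exact Fintype.linearIndependent_iff.1 bs.linearIndependent c this a
  have hπi := pi_inj e (fun i a b => D a i b) he hes π hlin hinj
  have hπs : Function.Surjective π := by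
    rw [← LinearMap.range_eq_top, eq_top_iff, ← hVs, Submodule.span_le]
    intro v hv
    have := congrArg (Subtype.val) (bs.sum_repr ⟨v, hv⟩)
    simp only [AddSubmonoidClass.coe_finsetSum, Submodule.coe_smul, hC] at this
    rw [← this]
    exact sum_mem fun a _ => Submodule.smul_mem _ _ ⟨e a, hπe a⟩
  exact ⟨(LinearEquiv.ofBijective π ⟨hπi, hπs⟩).symm⟩

theorem backward (S : Type*) [DivisionRing S] (n l : ℕ) (Q : Matrix (Fin l) (Fin l) (FA S n))
    (hQ : ∀ i j, Q i j ∈ RingHom.ker (freeAlgAug S n)) :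
    Function.Bijective (fun m : Fin n → 
      ((Fin l → FA S n) ⧸ LinearMap.range (Matrix.vecMulLinear (1 + Q))) => 
      ∑ i : Fin n, (X i : FA S n) • m i) := by
  have hdec : ∀ v : Fin l → FA S n, (∀ a, freeAlgAug S n (v a) = 0) → 
      ∃ t : Fin n → Fin l → FA S n, v = ∑ i, (X i : FA S n) • t i := by
    intro v hv
    choose t ht using fun a => decomp (v a)
    refine ⟨fun i a => t a i, ?_⟩
    funext a
    rw [ht a, hv a]
    simp
  have haugQ : ∀ (v : Fin l → FA S n) a, freeAlgAug S n (Matrix.vecMul v Q a) = 0 := by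
    intro v a
    simp only [Matrix.vecMul, dotProduct, map_sum, map_mul, (RingHom.mem_ker).1 (hQ _ _), mul_zero,
      Finset.sum_const_zero]
  constructor
  · intro m m' hmm
    rw [← sub_eq_zero]
    have h : ∑ i, (X i : FA S n) • (m - m') i = 0 := by
      simp only [Pi.sub_apply, smul_sub, Finset.sum_sub_distrib, sub_eq_zero]
      exact hmm
    generalize m - m' = y at h
    choose v hv using fun i => Submodule.mkQ_surjective _ (y i)
    simp only [← hv, ← map_smul, ← map_sum] at h
    rw [Submodule.mkQ_apply, Submodule.Quotient.mk_eq_zero] at h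
    obtain ⟨w, hw⟩ := h
    have hw' := hw
    rw [Matrix.vecMulLinear_apply, Matrix.vecMul_add, Matrix.vecMul_one] at hw
    obtain ⟨t, rfl⟩ := hdec w (by
      intro a
      have := congrArg (freeAlgAug S n) (congrFun hw a)
      rw [Pi.add_apply, map_add, haugQ, add_zero] at this
      rw [this]
      simp only [Finset.sum_apply, Pi.smul_apply, smul_eq_mul, map_sum, map_mul, aug_X, zero_mul,
        Finset.sum_const_zero])
    simp only [map_sum, map_smul] at hw'
    have hz : ∀ a, (fun i => Matrix.vecMulLinear (1 + Q) (t i) a - v i a) = 0 := by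
      intro a
      apply X_mul_indep
      have := congrFun hw' a
      simp only [Finset.sum_apply, Pi.smul_apply, smul_eq_mul] at this
      simp only [mul_sub, Finset.sum_sub_distrib, this, sub_self]
    funext i
    rw [← hv i, Submodule.mkQ_apply, Pi.zero_apply, Submodule.Quotient.mk_eq_zero]
    exact ⟨t i, funext fun a => sub_eq_zero.1 (congrFun (hz a) i)⟩
  · intro y
    obtain ⟨v, rfl⟩ := Submodule.mkQ_surjective _ y
    obtain ⟨t, ht⟩ := hdec (-(Matrix.vecMul v Q)) (fun a => by rw [Pi.neg_apply, map_neg, haugQ, neg_zero])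
    refine ⟨fun i => Submodule.mkQ _ (t i), ?_⟩
    simp only [← map_smul, ← map_sum, ← ht]
    rw [← sub_eq_zero, ← map_sub, Submodule.mkQ_apply, Submodule.Quotient.mk_eq_zero]
    refine ⟨-v, ?_⟩
    rw [Matrix.vecMulLinear_apply, Matrix.vecMul_add, Matrix.vecMul_one, Matrix.neg_vecMul]
    abel

end SatoAux

theorem stmt7 (S : Type*) [DivisionRing S] (n : ℕ) (hn : 1 ≤ n)
    (M : Type*) [AddCommGroup M]
    [Module (MonoidAlgebra S (FreeMonoid (Fin n))) M] :
    ((∃ (p q : ℕ)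
        (f : (Fin p → MonoidAlgebra S (FreeMonoid (Fin n))) →ₗ[MonoidAlgebra S (FreeMonoid (Fin n))]
          (Fin q → MonoidAlgebra S (FreeMonoid (Fin n))))
        (g : (Fin q → MonoidAlgebra S (FreeMonoid (Fin n))) →ₗ[MonoidAlgebra S (FreeMonoid (Fin n))] M),
        Function.Surjective g ∧ LinearMap.ker g = LinearMap.range f) ∧
      Function.Bijective (fun m : Fin n → M =>
        ∑ i : Fin n,
          (MonoidAlgebra.of S (FreeMonoid (Fin n)) (FreeMonoid.of i)) • m i))
    ↔
    ∃ (l : ℕ) (Q : Matrix (Fin l) (Fin l) (MonoidAlgebra S (FreeMonoid (Fin n)))),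
      (∀ i j, Q i j ∈ RingHom.ker (freeAlgAug S n)) ∧
      Nonempty (M ≃ₗ[MonoidAlgebra S (FreeMonoid (Fin n))]
        ((Fin l → MonoidAlgebra S (FreeMonoid (Fin n))) ⧸
          LinearMap.range (Matrix.vecMulLinear (1 + Q)))) := by
  constructor
  · rintro ⟨⟨p, q, f, g, hg, -⟩, hb⟩
    exact SatoAux.forward S n M q g hg hb
  · rintro ⟨l, Q, hQ, ⟨E⟩⟩
    refine ⟨⟨l, l, Matrix.vecMulLinear (1 + Q), E.symm.toLinearMap ∘ₗ Submodule.mkQ _,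
      E.symm.surjective.comp (Submodule.mkQ_surjective _), ?_⟩, ?_⟩
    · rw [LinearEquiv.ker_comp, Submodule.ker_mkQ]
    · have hb := SatoAux.backward S n l Q hQ
      have h2 := (E.symm.bijective.comp hb).comp
        (Equiv.piCongrRight fun _ : Fin n => E.toEquiv).bijective
      convert h2 using 1
      funext m
      simp [map_sum]
end

section
/- Let k be a field, n ≥ 1, F the free group on generators t_1, …, t_n, and Λ = MonoidAlgebra k F. Let s ∈ F be a reduced word of length 1 (i.e., s = t_i or s = t_i^{-1} for some i), and let a, b ∈ k with a ≠ 0, b ≠ 0 and a + b = 1. Then the special comonic polynomial γ = a·1 + b·s of length 1 is irreducible in Λ: γ is not a unit of Λ, and whenever γ = α·β with α, β ∈ Λ, either α is a unit or β is a unit. -/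
namespace Stmt12Aux

open FreeGroup

variable {ι : Type*} [DecidableEq ι]

theorem word_append {x b : FreeGroup ι} (h : FreeGroup.norm (x * b) = FreeGroup.norm x + FreeGroup.norm b) :
    (x * b).toWord = x.toWord ++ b.toWord := by
  apply (toWord_mul_sublist x b).eq_of_length
  simpa [FreeGroup.norm] using h

theorem cancel_of_ne {x b : FreeGroup ι} (h : FreeGroup.norm (x * b) ≠ FreeGroup.norm x + FreeGroup.norm b) :
    ∃ t : ι × Bool, x.toWord.getLast? = some (t.1, !t.2) ∧ b.toWord.head? = some t := by
  by_contra hc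
  apply h
  have hr : IsReduced (x.toWord ++ b.toWord) := by
    refine List.IsChain.append isReduced_toWord isReduced_toWord ?_
    intro p hp q hq hpq
    by_contra h2
    refine hc ⟨q, ?_, hq⟩
    rw [Option.mem_def] at hp
    rw [hp]
    congr 1
    ext
    · exact hpq
    · revert h2
      cases p.2 <;> cases q.2 <;> simp
  rw [FreeGroup.norm, toWord_mul, hr.reduce_eq, List.length_append]
  rfl

theorem norm_drop {x b : FreeGroup ι} {t : ι × Bool}
    (hx : x.toWord.getLast? = some (t.1, !t.2)) (hb : b.toWord.head? = some t) :
    FreeGroup.norm (x * b) + 2 ≤ FreeGroup.norm x + FreeGroup.norm b := by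
  obtain ⟨l, hl⟩ := List.getLast?_eq_some_iff.1 hx
  obtain ⟨m, hm⟩ := List.head?_eq_some_iff.1 hb
  have h1 : x * b = mk (l ++ m) := by
    rw [← mk_toWord (x := x), ← mk_toWord (x := b), hl, hm, mul_mk]
    apply Quot.sound
    obtain ⟨i, e⟩ := t
    simpa using (Red.Step.not_rev (L₁ := l) (L₂ := m) (x := i) (b := e))
  have h2 : FreeGroup.norm (x * b) ≤ (l ++ m).length := by rw [h1]; exact norm_mk_le
  have h3 : FreeGroup.norm x = l.length + 1 := by rw [FreeGroup.norm, hl]; simp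
  have h4 : FreeGroup.norm b = m.length + 1 := by rw [FreeGroup.norm, hm]; simp
  rw [List.length_append] at h2
  omega

theorem core {A B : Finset (FreeGroup ι)} {s : FreeGroup ι} (hs : FreeGroup.norm s = 1)
    (H : ∀ x ∈ A, ∀ w ∈ B, UniqueMul A B x w → x * w = 1 ∨ x * w = s)
    (hA : A.Nonempty) {r : ℕ} (hB : ∀ w ∈ B, FreeGroup.norm w ≤ r)
    (hmin : ∀ g : FreeGroup ι, ∃ w ∈ B, r ≤ FreeGroup.norm (g * w)) :
    (∃ g, A = {g}) ∨ (∃ g, B = {g}) := by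
  have H1 : ∀ x ∈ A, ∀ w ∈ B, UniqueMul A B x w → FreeGroup.norm (x * w) ≤ 1 := by
    intro x hx w hw hu
    rcases H x hx w hw hu with h | h <;> rw [h]
    · simp
    · omega
  obtain ⟨x0, hx0, hmax⟩ := A.exists_max_image FreeGroup.norm hA
  generalize hl : FreeGroup.norm x0 = l at hmax
  obtain ⟨w0, hw0, hw0r⟩ := hmin 1
  rw [one_mul] at hw0r
  have hw0r : FreeGroup.norm w0 = r := le_antisymm (hB _ hw0) hw0r
  rcases Nat.eq_zero_or_pos l with hl0 | hl0
  · left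
    refine ⟨1, Finset.eq_singleton_iff_nonempty_unique_mem.2 ⟨hA, fun x hx => ?_⟩⟩
    have := hmax x hx
    exact norm_eq_zero.1 (by omega)
  rcases Nat.eq_zero_or_pos r with hr0 | hr0
  · right
    refine ⟨1, Finset.eq_singleton_iff_nonempty_unique_mem.2 ⟨⟨w0, hw0⟩, fun x hx => ?_⟩⟩
    have := hB x hx
    exact norm_eq_zero.1 (by omega)
  have hne : ∀ x ∈ A, FreeGroup.norm x = l → ∀ w ∈ B, FreeGroup.norm w = r →
      FreeGroup.norm (x * w) ≠ FreeGroup.norm x + FreeGroup.norm w := by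
    intro x hx hxl w hw hwr h
    have hu : UniqueMul A B x w := by
      intro y b hy hb hyb
      have h1 := norm_mul_le y b
      have h2 := hmax y hy
      have h3 := hB b hb
      rw [hyb] at h1
      have h4 : FreeGroup.norm (y * b) = FreeGroup.norm y + FreeGroup.norm b := by rw [hyb]; omega
      have h5 := word_append h4
      rw [hyb, word_append h] at h5
      have h6 := List.append_inj h5 (by simp only [FreeGroup.norm] at *; omega)
      exact ⟨(toWord_injective h6.1).symm, (toWord_injective h6.2).symm⟩
    have := H1 x hx w hw hu
    omega
  obtain ⟨t, htx, htw⟩ := cancel_of_ne (hne x0 hx0 hl w0 hw0 hw0r)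
  have hE : ∀ x ∈ A, FreeGroup.norm x = l → x.toWord.getLast? = some (t.1, !t.2) := by
    intro x hx hxl
    obtain ⟨t', h1, h2⟩ := cancel_of_ne (hne x hx hxl w0 hw0 hw0r)
    rw [htw] at h2
    cases h2
    exact h1
  have hS : ∀ w ∈ B, FreeGroup.norm w = r → w.toWord.head? = some t := by
    intro w hw hwr
    obtain ⟨t', h1, h2⟩ := cancel_of_ne (hne x0 hx0 hl w hw hwr)
    rw [htx] at h1
    have : t = t' := by
      simp only [Option.some.injEq, Prod.mk.injEq, Bool.not_inj_iff] at h1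
      exact Prod.ext h1.1 h1.2
    rw [this]; exact h2
  obtain ⟨τ, hτ⟩ : ∃ τ : FreeGroup ι, τ.toWord = [(t.1, !t.2)] :=
    ⟨mk [(t.1, !t.2)], by simp [reduce_singleton]⟩
  have hτn : FreeGroup.norm τ = 1 := by rw [FreeGroup.norm, hτ]; rfl
  obtain ⟨w', hw', hw'r⟩ := hmin τ
  have hw'S : w'.toWord.head? ≠ some t := by
    intro h
    have h1 := norm_drop (x := τ) (b := w') (t := t) (by rw [hτ]; rfl) h
    have := hB w' hw'
    omega
  have hw'n : FreeGroup.norm w' + 1 = r := by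
    have h1 := norm_mul_le τ w'
    have h2 := hB w' hw'
    have h3 : FreeGroup.norm w' ≠ r := fun h => hw'S (hS w' hw' h)
    omega
  have hxw : FreeGroup.norm (x0 * w') = FreeGroup.norm x0 + FreeGroup.norm w' := by
    by_contra h
    obtain ⟨t', h1, h2⟩ := cancel_of_ne h
    rw [htx] at h1
    have : t = t' := by
      simp only [Option.some.injEq, Prod.mk.injEq, Bool.not_inj_iff] at h1
      exact Prod.ext h1.1 h1.2
    rw [← this] at h2
    exact hw'S h2
  have hu : UniqueMul A B x0 w' := by
    intro y b hy hb hyb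
    have h1 := norm_mul_le y b
    have h2 := hmax y hy
    have h3 := hB b hb
    have hyb' : FreeGroup.norm (y * b) = FreeGroup.norm x0 + FreeGroup.norm w' := by rw [hyb, hxw]
    have hyl : FreeGroup.norm y = l := by
      by_contra hyl
      have h4 : FreeGroup.norm (y * b) = FreeGroup.norm y + FreeGroup.norm b := by omega
      have h5 := word_append h4
      have hbr : FreeGroup.norm b = r := by omega
      obtain ⟨m, hm⟩ := List.head?_eq_some_iff.1 (hS b hb hbr)
      obtain ⟨l', hl'⟩ := List.getLast?_eq_some_iff.1 htx
      rw [hyb, word_append hxw, hm, hl', List.append_cons y.toWord] at h5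
      have h7 : l'.length + 1 = FreeGroup.norm x0 := by rw [FreeGroup.norm, hl']; simp
      have h6 := (List.append_inj h5 (by
        simp only [List.length_append, List.length_cons, List.length_nil]
        change _ = FreeGroup.norm y + 1
        omega)).1
      have h8 := (List.append_inj' h6 rfl).2
      simp only [List.cons.injEq, and_true] at h8
      have h9 := congrArg Prod.snd h8
      simp at h9
    have hbr : FreeGroup.norm b ≠ r := by
      intro hbr
      have := norm_drop (hE y hy hyl) (hS b hb hbr)
      omega
    have h4 : FreeGroup.norm (y * b) = FreeGroup.norm y + FreeGroup.norm b := by omega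
    have h5 := word_append h4
    rw [hyb, word_append hxw] at h5
    have h6 := List.append_inj h5 (by simp only [FreeGroup.norm] at *; omega)
    exact ⟨(toWord_injective h6.1).symm, (toWord_injective h6.2).symm⟩
  have hle := H1 x0 hx0 w' hw' hu
  have hl1 : l = 1 := by omega
  have hr1 : r = 1 := by omega
  subst hl1 hr1
  have hw'1 : w' = 1 := norm_eq_zero.1 (by omega)
  subst hw'1
  have hx0s : x0 = s := by
    rcases H x0 hx0 1 hw' hu with h | h
    · rw [mul_one] at h; rw [h] at hl; simp at hl
    · simpa using h
  have hAx : ∀ x ∈ A, x = 1 ∨ x = x0 := by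
    intro x hx
    rcases Nat.eq_zero_or_pos (FreeGroup.norm x) with h | h
    · exact Or.inl (norm_eq_zero.1 h)
    · right
      have h1 : FreeGroup.norm x = 1 := le_antisymm (hmax x hx) h
      obtain ⟨l', hl'⟩ := List.getLast?_eq_some_iff.1 htx
      obtain ⟨lb, hlb⟩ := List.getLast?_eq_some_iff.1 (hE x hx h1)
      rw [FreeGroup.norm, hlb] at h1
      rw [FreeGroup.norm, hl'] at hl
      simp at h1 hl
      apply toWord_injective
      rw [hl', hlb, h1, hl]
  by_cases h1A : (1 : FreeGroup ι) ∈ A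
  · exfalso
    have hu2 : UniqueMul A B 1 w0 := by
      intro y b hy hb hyb
      rcases hAx y hy with rfl | rfl
      · simpa using hyb
      · exfalso
        rw [one_mul] at hyb
        rcases Nat.eq_zero_or_pos (FreeGroup.norm b) with h | h
        · rw [norm_eq_zero.1 h, mul_one] at hyb
          rw [← hyb] at htw
          obtain ⟨l', hl'⟩ := List.getLast?_eq_some_iff.1 htx
          rw [FreeGroup.norm, hl'] at hl
          simp at hl
          rw [hl', hl] at htw
          simp at htw
          have := congrArg Prod.snd htw
          simp at this
        · have h2 : FreeGroup.norm b = 1 := le_antisymm (hB b hb) h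
          have := norm_drop htx (hS b hb h2)
          rw [hyb] at this
          omega
    rcases H 1 h1A w0 hw0 hu2 with h | h
    · rw [one_mul] at h; rw [h] at hw0r; simp at hw0r
    · rw [one_mul, ← hx0s] at h
      have := hu2 hx0 hw' (by rw [mul_one, one_mul, h])
      rw [this.1] at hl
      simp at hl
  · left
    refine ⟨x0, Finset.eq_singleton_iff_unique_mem.2 ⟨hx0, fun x hx => ?_⟩⟩
    rcases hAx x hx with rfl | h
    · exact absurd hx h1A
    · exact h

theorem core' {A B : Finset (FreeGroup ι)} {s : FreeGroup ι} (hs : FreeGroup.norm s = 1)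
    (H : ∀ x ∈ A, ∀ w ∈ B, UniqueMul A B x w → x * w = 1 ∨ x * w = s)
    (hA : A.Nonempty) (hB : B.Nonempty) :
    (∃ g, A = {g}) ∨ (∃ g, B = {g}) := by
  let f : FreeGroup ι → ℕ := fun g => B.sup fun w => FreeGroup.norm (g * w)
  obtain ⟨g, hg⟩ : ∃ g, ∀ h, f g ≤ f h :=
    ⟨Function.argmin f, fun h => Function.argmin_le f h⟩
  have key := core (A := A.image (· * g⁻¹)) (B := B.image (g * ·)) hs (r := f g) ?_
    (hA.image _) ?_ ?_
  · rcases key with ⟨y, hy⟩ | ⟨y, hy⟩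
    · left
      refine ⟨y * g, Finset.eq_singleton_iff_nonempty_unique_mem.2 ⟨hA, fun x hx => ?_⟩⟩
      have := Finset.mem_image_of_mem (· * g⁻¹) hx
      rw [hy, Finset.mem_singleton] at this
      rw [← this]; simp
    · right
      refine ⟨g⁻¹ * y, Finset.eq_singleton_iff_nonempty_unique_mem.2 ⟨hB, fun x hx => ?_⟩⟩
      have := Finset.mem_image_of_mem (g * ·) hx
      rw [hy, Finset.mem_singleton] at this
      rw [← this]; simp
  · intro x' hx' w' hw' hu
    obtain ⟨x, hx, rfl⟩ := Finset.mem_image.1 hx'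
    obtain ⟨w, hw, rfl⟩ := Finset.mem_image.1 hw'
    have e : ∀ x w : FreeGroup ι, (x * g⁻¹) * (g * w) = x * w := fun x w => by group
    simp only [e]
    refine H x hx w hw ?_
    intro y b hy hb hyb
    have := hu (Finset.mem_image_of_mem (· * g⁻¹) hy) (Finset.mem_image_of_mem (g * ·) hb)
      (by simp only [e]; exact hyb)
    exact ⟨mul_right_cancel this.1, mul_left_cancel this.2⟩
  · intro w' hw'
    obtain ⟨w, hw, rfl⟩ := Finset.mem_image.1 hw'
    exact Finset.le_sup (f := fun w => FreeGroup.norm (g * w)) hw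
  · intro h
    obtain ⟨w, hw, e⟩ := Finset.exists_mem_eq_sup B hB (fun w => FreeGroup.norm (h * g * w))
    refine ⟨g * w, Finset.mem_image_of_mem _ hw, ?_⟩
    rw [← mul_assoc, ← e]
    exact hg (h * g)

theorem isUnit_of_support {k : Type*} [Field k] {α : MonoidAlgebra k (FreeGroup ι)}
    {g : FreeGroup ι} (h : α.coeff.support = {g}) : IsUnit α := by
  obtain ⟨c, hc, e⟩ := Finsupp.support_eq_singleton'.1 h
  have e' : α = MonoidAlgebra.single g c := by
    apply MonoidAlgebra.coeff_injective
    rw [e]; rfl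
  rw [e']
  refine ⟨⟨MonoidAlgebra.single g c, MonoidAlgebra.single g⁻¹ c⁻¹, ?_, ?_⟩, rfl⟩
  · rw [MonoidAlgebra.single_mul_single, mul_inv_cancel, mul_inv_cancel₀ hc]; rfl
  · rw [MonoidAlgebra.single_mul_single, inv_mul_cancel, inv_mul_cancel₀ hc]; rfl

theorem not_isUnit {k : Type*} [Field k] {s : FreeGroup ι} (hs : FreeGroup.norm s = 1)
    {a b : k} (ha : a ≠ 0) (hb : b ≠ 0) :
    ¬ IsUnit (a • (1 : MonoidAlgebra k (FreeGroup ι)) + b • MonoidAlgebra.of k (FreeGroup ι) s) := by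
  obtain ⟨φ, hφ⟩ : ∃ φ : FreeGroup ι →* kˣ, ((φ s : kˣ) : k) = - a / b := by
    have hc : - a / b ≠ 0 := div_ne_zero (neg_ne_zero.2 ha) hb
    obtain ⟨⟨i, e⟩, h⟩ := List.length_eq_one_iff.1 hs
    have h' : s = mk [(i, e)] := by rw [← h, mk_toWord]
    cases e
    · exact ⟨FreeGroup.lift fun _ => (Units.mk0 _ hc)⁻¹, by simp [h']⟩
    · exact ⟨FreeGroup.lift fun _ => Units.mk0 _ hc, by simp [h']⟩
  intro hu
  have := hu.map (MonoidAlgebra.lift k k (FreeGroup ι) ((Units.coeHom k).comp φ))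
  rw [map_add, map_smul, map_smul, _root_.map_one, MonoidAlgebra.lift_of] at this
  apply this.ne_zero
  simp only [MonoidHom.comp_apply, Units.coeHom_apply, hφ, smul_eq_mul]
  field_simp
  ring

end Stmt12Aux


/-- For a field `k`, a reduced word `s` of length `1` in the free group, and nonzero scalars
`a, b ∈ k` with `a + b = 1`, the special comonic polynomial `a•1 + b•s` of length `1` is
irreducible in the group algebra of the free group. -/
theorem stmt12 (k : Type*) [Field k] (n : ℕ) (hn : 1 ≤ n)
    (s : FreeGroup (Fin n)) (hs : (FreeGroup.toWord s).length = 1)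
    (a b : k) (ha : a ≠ 0) (hb : b ≠ 0) (hab : a + b = 1) :
    Irreducible
      (a • (1 : MonoidAlgebra k (FreeGroup (Fin n)))
        + b • (MonoidAlgebra.of k (FreeGroup (Fin n)) s
            : MonoidAlgebra k (FreeGroup (Fin n)))) := by
  classical
  have hn1 := Stmt12Aux.not_isUnit (k := k) hs ha hb
  refine ⟨hn1, ?_⟩
  intro α β hαβ
  have hs1 : s ≠ 1 := by
    rintro rfl
    simp at hs
  have hc1 : (α * β).coeff 1 = a := by
    rw [← hαβ]
    simp [MonoidAlgebra.one_def, Finsupp.single_apply, hs1]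
  have hc0 : ∀ g, g ≠ 1 → g ≠ s → (α * β).coeff g = 0 := by
    intro g h1 h2
    rw [← hαβ]
    simp [MonoidAlgebra.one_def, Finsupp.single_apply, h1.symm, h2.symm]
  have hα : α.coeff.support.Nonempty := by
    rw [Finsupp.support_nonempty_iff, Ne, MonoidAlgebra.coeff_eq_zero]
    rintro rfl
    apply ha
    rw [← hc1]; simp
  have hβ : β.coeff.support.Nonempty := by
    rw [Finsupp.support_nonempty_iff, Ne, MonoidAlgebra.coeff_eq_zero]
    rintro rfl
    apply ha
    rw [← hc1]; simp
  have key : ∀ x ∈ α.coeff.support, ∀ w ∈ β.coeff.support,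
      UniqueMul α.coeff.support β.coeff.support x w → x * w = 1 ∨ x * w = s := by
    intro x hx w hw hu
    by_contra hcon
    push Not at hcon
    have := MonoidAlgebra.coeff_mul_mul_of_uniqueMul hu
    rw [hc0 _ hcon.1 hcon.2] at this
    exact mul_ne_zero (Finsupp.mem_support_iff.1 hx) (Finsupp.mem_support_iff.1 hw) this.symm
  rcases Stmt12Aux.core' (s := s) hs key hα hβ with ⟨g, hg⟩ | ⟨g, hg⟩
  · exact Or.inl (Stmt12Aux.isUnit_of_support hg)
  · exact Or.inr (Stmt12Aux.isUnit_of_support hg)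
end
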